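/- arXiv:1809.09581 — 2 statements merged into one kernel-verified Lean document; each statement's English description precedes it below -/
import Mathlib

section
/- Suppose the potential q is even on [0,a], i.e. q(a−x) = q(x) for all x ∈ [0,a]. Then for every λ ∈ ℂ, C(a) = 2·C(a/2)·S'(a/2) − 1 and C(a) = 1 + 2·S(a/2)·C'(a/2). -/
/-- The Wronskian of two solutions of `y'' = p y` on `[0,a]` is constant. -/
theorem wronskian_eq_wronskian_zero {a : ℝ} {p u v du dv : ℝ → ℂ}
    (hu : ∀ x ∈ Set.Icc 0 a, HasDerivWithinAt u (du x) (Set.Icc 0 a) x)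
    (hdu : ∀ x ∈ Set.Icc 0 a, HasDerivWithinAt du (p x * u x) (Set.Icc 0 a) x)
    (hv : ∀ x ∈ Set.Icc 0 a, HasDerivWithinAt v (dv x) (Set.Icc 0 a) x)
    (hdv : ∀ x ∈ Set.Icc 0 a, HasDerivWithinAt dv (p x * v x) (Set.Icc 0 a) x)
    {x : ℝ} (hx : x ∈ Set.Icc 0 a) :
    u x * dv x - du x * v x = u 0 * dv 0 - du 0 * v 0 := by
  have h : ∀ x ∈ Set.Icc 0 a,
      HasDerivWithinAt (fun x => u x * dv x - du x * v x) 0 (Set.Icc 0 a) x := by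
    intro x hx
    refine (((hu x hx).mul (hdv x hx)).sub ((hdu x hx).mul (hv x hx))).congr_deriv ?_
    ring
  refine constant_of_derivWithin_zero (fun x hx => (h x hx).differentiableWithinAt)
    (fun x hx => ?_) x hx
  exact (h x (Set.Ico_subset_Icc_self hx)).derivWithin
    (uniqueDiffOn_Icc (hx.1.trans_lt hx.2) x (Set.Ico_subset_Icc_self hx))

/-- Derivative of the reflection of a function about the midpoint of `[0,a]`. -/
theorem hasDerivWithinAt_reflect {a : ℝ} {u du : ℝ → ℂ}
    (hu : ∀ x ∈ Set.Icc 0 a, HasDerivWithinAt u (du x) (Set.Icc 0 a) x)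
    {x : ℝ} (hx : x ∈ Set.Icc 0 a) :
    HasDerivWithinAt (fun x => u (a - x)) (-du (a - x)) (Set.Icc 0 a) x := by
  have hmaps : Set.MapsTo (fun x => a - x) (Set.Icc 0 a) (Set.Icc 0 a) :=
    fun y hy => ⟨by linarith [hy.2], by linarith [hy.1]⟩
  have h := (hu (a - x) (hmaps hx)).scomp x
    ((hasDerivWithinAt_id x (Set.Icc 0 a)).const_sub a) hmaps
  simpa [Function.comp_def] using h


/-- Magnus–Winkler identity for even potentials: if `q` is even on `[0,a]`,
then the cosine-like solution `C` of `−y'' + q y = λ y` (with `C(0)=1`,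
`C'(0)=0`) satisfies `C(a) = 2 C(a/2) S'(a/2) − 1 = 1 + 2 S(a/2) C'(a/2)`,
where `S` is the sine-like solution (`S(0)=0`, `S'(0)=1`). -/
theorem even_potential_C_half_identities
    (a : ℝ) (ha : 0 < a) (q : ℝ → ℝ) (hq : ContinuousOn q (Set.Icc 0 a))
    (hqeven : ∀ x ∈ Set.Icc 0 a, q (a - x) = q x)
    (lam : ℂ) (C S Cd Sd : ℝ → ℂ)
    (hC : ∀ x ∈ Set.Icc 0 a, HasDerivWithinAt C (Cd x) (Set.Icc 0 a) x)
    (hC' : ∀ x ∈ Set.Icc 0 a,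
      HasDerivWithinAt Cd ((q x : ℂ) * C x - lam * C x) (Set.Icc 0 a) x)
    (hS : ∀ x ∈ Set.Icc 0 a, HasDerivWithinAt S (Sd x) (Set.Icc 0 a) x)
    (hS' : ∀ x ∈ Set.Icc 0 a,
      HasDerivWithinAt Sd ((q x : ℂ) * S x - lam * S x) (Set.Icc 0 a) x)
    (hC0 : C 0 = 1) (hCd0 : Cd 0 = 0) (hS0 : S 0 = 0) (hSd0 : Sd 0 = 1) :
    C a = 2 * C (a / 2) * Sd (a / 2) - 1 ∧
    C a = 1 + 2 * S (a / 2) * Cd (a / 2) := by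
  have hmid : a / 2 ∈ Set.Icc 0 a := ⟨by linarith, by linarith⟩
  have hdC : ∀ x ∈ Set.Icc 0 a,
      HasDerivWithinAt Cd (((q x : ℂ) - lam) * C x) (Set.Icc 0 a) x :=
    fun x hx => (hC' x hx).congr_deriv (by ring)
  have hdS : ∀ x ∈ Set.Icc 0 a,
      HasDerivWithinAt Sd (((q x : ℂ) - lam) * S x) (Set.Icc 0 a) x :=
    fun x hx => (hS' x hx).congr_deriv (by ring)
  have hdR : ∀ x ∈ Set.Icc 0 a, HasDerivWithinAt (fun x => -Cd (a - x))
      (((q x : ℂ) - lam) * C (a - x)) (Set.Icc 0 a) x := by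
    intro x hx
    refine (hasDerivWithinAt_reflect hdC hx).neg.congr_deriv ?_
    rw [hqeven x hx, neg_neg]
  have hCS := wronskian_eq_wronskian_zero hC hdC hS hdS hmid
  have hRS := wronskian_eq_wronskian_zero (p := fun x => (q x : ℂ) - lam)
    (fun x hx => hasDerivWithinAt_reflect hC hx) hdR hS hdS hmid
  simp only [hC0, hCd0, hS0, hSd0, sub_zero, sub_half] at hCS hRS
  constructor
  · linear_combination -hRS - hCS
  · linear_combination -hRS + hCS
end

section
/- Let θ1, θ2 ∈ ℝ and set α̃ = exp(i·θ1), β = exp(−i·θ2). For j = 1, ..., 5 let c_j, s_j, c_j', s_j' be complex numbers satisfying c_j·s_j' − s_j·c_j' = 1. Then there exists a nonzero vector (A1, ..., A5, B1, ..., B5) ∈ ℂ¹⁰ satisfying the homogeneous system: A1·c1 + B1·s1 = A2·c2 + B2·s2 = α̃·A2 = A3·c3 + B3·s3 = A4·c4 + B4·s4; (A1·c1' + B1·s1') + (A2·c2' + B2·s2') − α̃·B2 + (A3·c3' + B3·s3') + (A4·c4' + B4·s4') = 0; A4 = A5·c5 + B5·s5 = α̃·A3 = α̃·A5 = α̃·β·A1;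 and B4 − (A5·c5' + B5·s5') + α̃·B3 + α̃·B5 + α̃·β·B1 = 0, if and only if Ψ = 0, where Ψ = (s1'·s2·s3·s4 + s1·s2'·s3·s4 + s1·s2·s3'·s4 + s1·s2·s3·s4')·(c5 + s5' − 2·cos(θ1)) + (c1·s3·s4·s5 + c3·s1·s4·s5 + c4·s1·s3·s5 + c5·s1·s3·s4)·(s2' + c2 − 2·cos(θ1)) + s1·s2·s5·(c4'·s3 + c4·s3' + c3'·s4 + c3·s4' − 2·cos(θ1)) + s2·s3·s5·(c1'·s4 + c1·s4' + s1'·c4 − 2·cos(θ1−θ2)) + s2·s4·s5·(s1'·c3 + c1·s3' − 2·cos(θ2)) + s1·s3·s4·(c2·s5' − s2'·c5 − 2·(c2 + s5')·cos(θ1) + 4·cos²(θ1)). (This is the characteristic function of the periodic quantum graph associated with the elongated triangular tiling, with possibly distinct, possibly non-even edge potentials.) -/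
/-- The vertex conditions for the elongated triangular tiling, reduced to the unknowns
`A1, A2, B1, ..., B5` by means of `A4 = a * A3`, `A3 = A5` and `A5 = b * A1`. -/
def reducedVertexMatrix
    (a b c1 s1 c1' s1' c2 s2 c2' s2' c3 s3 c3' s3' c4 s4 c4' s4' c5 s5 c5' s5' : ℂ) :
    Matrix (Fin 7) (Fin 7) ℂ :=
  !![c1, -a, s1, 0, 0, 0, 0;
     0, c2 - a, 0, s2, 0, 0, 0;
     b * c3, -a, 0, 0, s3, 0, 0;
     a * b * c4, -a, 0, 0, 0, s4, 0;
     b * (c5 - a), 0, 0, 0, 0, 0, s5;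
     c1' + b * c3' + a * b * c4', c2', s1', s2' - a, s3', s4', 0;
     -(b * c5'), 0, a * b, 0, a, 1, a - s5']

set_option maxHeartbeats 4000000 in
lemma det_reducedVertexMatrix
    {a b C C2 C12 c1 s1 c1' s1' c2 s2 c2' s2' c3 s3 c3' s3' c4 s4 c4' s4' c5 s5 c5' s5' : ℂ}
    (hC : 2 * C * a = a ^ 2 + 1) (hC2 : 2 * C2 * b = b ^ 2 + 1)
    (hC12 : 2 * C12 * (a * b) = (a * b) ^ 2 + 1)
    (hW1 : c1 * s1' - s1 * c1' = 1)
    (hW2 : c2 * s2' - s2 * c2' = 1)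
    (hW3 : c3 * s3' - s3 * c3' = 1)
    (hW4 : c4 * s4' - s4 * c4' = 1)
    (hW5 : c5 * s5' - s5 * c5' = 1) :
    (reducedVertexMatrix a b c1 s1 c1' s1' c2 s2 c2' s2' c3 s3 c3' s3' c4 s4 c4' s4'
      c5 s5 c5' s5').det = a ^ 2 * b *
      ((s1' * s2 * s3 * s4 + s1 * s2' * s3 * s4 + s1 * s2 * s3' * s4
          + s1 * s2 * s3 * s4') * (c5 + s5' - 2 * C)
      + (c1 * s3 * s4 * s5 + c3 * s1 * s4 * s5 + c4 * s1 * s3 * s5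
          + c5 * s1 * s3 * s4) * (s2' + c2 - 2 * C)
      + s1 * s2 * s5 * (c4' * s3 + c4 * s3' + c3' * s4 + c3 * s4' - 2 * C)
      + s2 * s3 * s5 * (c1' * s4 + c1 * s4' + s1' * c4 - 2 * C12)
      + s2 * s4 * s5 * (s1' * c3 + c1 * s3' - 2 * C2)
      + s1 * s3 * s4 * (c2 * s5' - s2' * c5 - 2 * (c2 + s5') * C + 4 * C ^ 2)) := by
  simp [reducedVertexMatrix, Matrix.det_succ_row_zero, Fin.sum_univ_succ, Fin.succAbove]
  linear_combination
    (-(s2 * s4 * s5 * a ^ 2) - s2 * s3 * s5 * a) * hW1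
    + b * (s1 * s3 * s4 * (c5 * s5' + a ^ 2 - s5' * a - s5 * c5')
        - a * (c1 * s3 * s4 * s5 + s1 * c3 * s4 * s5 + s1 * s3 * c4 * s5 + s1 * s3 * s4 * c5)) * hW2
    + (-(s2 * s4 * s5 * a ^ 2 * b ^ 2) - s1 * s2 * s5 * a * b) * hW3
    + (-(s2 * s3 * s5 * a ^ 3 * b ^ 2) - s1 * s2 * s5 * a ^ 3 * b) * hW4
    + b * (s1 * s3 * s4 * (a ^ 2 + 1 - c2 * a)
        - a * (s1' * s2 * s3 * s4 + s1 * s2' * s3 * s4 + s1 * s2 * s3' * s4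
          + s1 * s2 * s3 * s4')) * hW5
    + b * (a * (s1' * s2 * s3 * s4 + s1 * s2' * s3 * s4 + s1 * s2 * s3' * s4 + s1 * s2 * s3 * s4'
          + c1 * s3 * s4 * s5 + s1 * c3 * s4 * s5 + s1 * s3 * c4 * s5 + s1 * s3 * s4 * c5
          + s1 * s2 * s5)
        + s1 * s3 * s4 * (c2 * a + s5' * a - 2 * a * C - a ^ 2 - 1)) * hC
    + s2 * s4 * s5 * a ^ 2 * hC2 + s2 * s3 * s5 * a * hC12

lemma two_mul_cos_mul_exp (θ : ℝ) :
    2 * (Real.cos θ : ℂ) * Complex.exp (Complex.I * θ) = Complex.exp (Complex.I * θ) ^ 2 + 1 := by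
  rw [Complex.ofReal_cos, Complex.two_cos, add_mul, ← Complex.exp_add, ← Complex.exp_add, sq,
    ← Complex.exp_add]
  ring_nf
  simp [add_comm]


/-- Characteristic function of the periodic quantum graph associated with the
elongated triangular tiling `(3³,4²)`, with possibly distinct, possibly
non-even edge potentials. -/
theorem elongated_triangular_tiling_characteristic_function
    (θ1 θ2 : ℝ)
    (c1 s1 c1' s1' c2 s2 c2' s2' c3 s3 c3' s3' c4 s4 c4' s4' c5 s5 c5' s5' : ℂ)
    (hW1 : c1 * s1' - s1 * c1' = 1)
    (hW2 : c2 * s2' - s2 * c2' = 1)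
    (hW3 : c3 * s3' - s3 * c3' = 1)
    (hW4 : c4 * s4' - s4 * c4' = 1)
    (hW5 : c5 * s5' - s5 * c5' = 1) :
    (∃ A1 A2 A3 A4 A5 B1 B2 B3 B4 B5 : ℂ,
      (A1, A2, A3, A4, A5, B1, B2, B3, B4, B5) ≠ (0, 0, 0, 0, 0, 0, 0, 0, 0, 0) ∧
      (let α : ℂ := Complex.exp (Complex.I * θ1);
       let β : ℂ := Complex.exp (-(Complex.I * θ2));
       A1 * c1 + B1 * s1 = A2 * c2 + B2 * s2 ∧
       A2 * c2 + B2 * s2 = α * A2 ∧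
       α * A2 = A3 * c3 + B3 * s3 ∧
       A3 * c3 + B3 * s3 = A4 * c4 + B4 * s4 ∧
       (A1 * c1' + B1 * s1') + (A2 * c2' + B2 * s2') - α * B2
         + (A3 * c3' + B3 * s3') + (A4 * c4' + B4 * s4') = 0 ∧
       A4 = A5 * c5 + B5 * s5 ∧
       A5 * c5 + B5 * s5 = α * A3 ∧
       α * A3 = α * A5 ∧
       α * A5 = α * β * A1 ∧
       B4 - (A5 * c5' + B5 * s5') + α * B3 + α * B5 + α * β * B1 = 0))
    ↔ (s1' * s2 * s3 * s4 + s1 * s2' * s3 * s4 + s1 * s2 * s3' * s4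
          + s1 * s2 * s3 * s4') * (c5 + s5' - 2 * (Real.cos θ1 : ℂ))
      + (c1 * s3 * s4 * s5 + c3 * s1 * s4 * s5 + c4 * s1 * s3 * s5
          + c5 * s1 * s3 * s4) * (s2' + c2 - 2 * (Real.cos θ1 : ℂ))
      + s1 * s2 * s5 * (c4' * s3 + c4 * s3' + c3' * s4 + c3 * s4'
          - 2 * (Real.cos θ1 : ℂ))
      + s2 * s3 * s5 * (c1' * s4 + c1 * s4' + s1' * c4
          - 2 * (Real.cos (θ1 - θ2) : ℂ))
      + s2 * s4 * s5 * (s1' * c3 + c1 * s3' - 2 * (Real.cos θ2 : ℂ))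
      + s1 * s3 * s4 * (c2 * s5' - s2' * c5
          - 2 * (c2 + s5') * (Real.cos θ1 : ℂ) + 4 * (Real.cos θ1 : ℂ) ^ 2)
      = 0 := by
  have hC := two_mul_cos_mul_exp θ1
  have hC2 := two_mul_cos_mul_exp (-θ2)
  have hC12 := two_mul_cos_mul_exp (θ1 - θ2)
  have ha := Complex.exp_ne_zero (Complex.I * θ1)
  have hb := Complex.exp_ne_zero (-(Complex.I * θ2))
  have hab : Complex.exp (Complex.I * (θ1 - θ2 : ℝ))
      = Complex.exp (Complex.I * θ1) * Complex.exp (-(Complex.I * θ2)) := by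
    rw [← Complex.exp_add]; push_cast; ring_nf
  rw [hab] at hC12
  rw [Real.cos_neg, Complex.ofReal_neg, mul_neg] at hC2
  dsimp only
  generalize Complex.exp (Complex.I * θ1) = a at *
  generalize Complex.exp (-(Complex.I * θ2)) = b at *
  have hdet := det_reducedVertexMatrix hC hC2 hC12 hW1 hW2 hW3 hW4 hW5
  rw [← mul_eq_zero_iff_left (mul_ne_zero (pow_ne_zero 2 ha) hb), ← hdet,
    ← Matrix.exists_mulVec_eq_zero_iff]
  constructor
  · rintro ⟨A1, A2, A3, A4, A5, B1, B2, B3, B4, B5, hne, e1, e2, e3, e4, e5, e6, e7, e8, e9, e10⟩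
    obtain rfl : A3 = A5 := mul_left_cancel₀ ha e8
    obtain rfl : A3 = b * A1 := mul_left_cancel₀ ha (by rw [e9, mul_assoc])
    obtain rfl : A4 = a * (b * A1) := e6.trans e7
    refine ⟨![A1, A2, B1, B2, B3, B4, B5], fun h ↦ hne ?_, ?_⟩
    · simp only [Matrix.cons_eq_zero_iff] at h
      simp [h]
    · ext i
      fin_cases i <;>
        simp [reducedVertexMatrix, Matrix.mulVec, dotProduct, Fin.sum_univ_succ]
      · linear_combination e1 + e2
      · linear_combination e2
      · linear_combination -e3
      · linear_combination -e3 - e4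
      · linear_combination e7
      · linear_combination e5
      · linear_combination e10
  · rintro ⟨v, hv, h⟩
    have e1 := congrFun h 0
    have e2 := congrFun h 1
    have e3 := congrFun h 2
    have e4 := congrFun h 3
    have e5 := congrFun h 4
    have e6 := congrFun h 5
    have e7 := congrFun h 6
    simp [reducedVertexMatrix, Matrix.mulVec, dotProduct, Fin.sum_univ_succ]
      at e1 e2 e3 e4 e5 e6 e7
    refine ⟨v 0, v 1, b * v 0, a * (b * v 0), b * v 0, v 2, v 3, v 4, v 5, v 6,
      fun h0 ↦ hv ?_, ?_⟩
    · simp only [Prod.mk.injEq] at h0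
      ext i
      fin_cases i <;> simp [h0]
    · refine ⟨?_, ?_, ?_, ?_, ?_, ?_, ?_, ?_, ?_, ?_⟩
      · linear_combination e1 - e2
      · linear_combination e2
      · linear_combination -e3
      · linear_combination e3 - e4
      · linear_combination e6
      · linear_combination -e5
      · linear_combination e5
      · rfl
      · ring
      · linear_combination e7
end
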